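/- arXiv:1110.4658 — 2 statements merged into one kernel-verified Lean document; each statement's English description precedes it below -/
import Mathlib

section
/- Let f₁, a₁, a₂, a₃, h ∈ ℝ and define the cubic polynomial F(y) = f₁ + a₁y + a₂y² + a₃y³. Then the following are equivalent: (A) for every T > 0 there exists a continuous function y : [0,T] → ℝ with y(t) = h + ∫_t^T F(y(s)) ds for all t ∈ [0,T]; (B) at least one of the following holds: (i) F(h) ≥ 0 and F has a real zero in [h, ∞); (ii) F(h) ≤ 0 and F has a real zero in (−∞, h]; (iii) a₃ = 0 and a₂ = 0. -/
open MeasureTheory Set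

/-!
In differential form the equation reads `y' = -F(y)`, `y(T) = h`. If `F` vanishes on the side of `h`
towards which it pushes backwards in time, let `[lo, hi]` be the interval between `h` and that zero.
Replacing `F` outside `[lo, hi]` by its value at the nearest endpoint gives a bounded Lipschitz
generator, solvable on every horizon by Picard–Lindelöf; the endpoints are barriers, so the solution
stays in `[lo, hi]` and also solves the original equation. If `F` is affine, the solution is
explicit. In the remaining case we may assume `F > 0` on `[h, ∞)` by the symmetry `y ↦ -y`; as `F`
grows at least quadratically, `1 + x ^ 2 ≤ C * F x` on `[h, ∞)`, so `C * arctan y` decreases at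
speed at least `1` and no solution exists for `T ≥ C * π`.
-/

open Filter Asymptotics Polynomial

/-- `y` solves the autonomous backward equation `y t = h + ∫_t^T F(y s) ds` on `[0, T]`. -/
def IsBackwardSolution (F : ℝ → ℝ) (h T : ℝ) (y : ℝ → ℝ) : Prop :=
  ContinuousOn y (Icc 0 T) ∧ ∀ t ∈ Icc (0 : ℝ) T, y t = h + ∫ s in t..T, F (y s)

/-- The backward equation with generator `F` and terminal value `h` has a solution on `[0, T]` for
every horizon `T > 0`. -/
def GloballySolvable (F : ℝ → ℝ) (h : ℝ) : Prop :=
  ∀ T : ℝ, 0 < T → ∃ y : ℝ → ℝ, IsBackwardSolution F h T y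

theorem image_le_of_deriv_left_gt_deriv_boundary {f f' B B' : ℝ → ℝ} {a b : ℝ}
    (hf : ContinuousOn f (Icc a b)) (hf' : ∀ x ∈ Ioc a b, HasDerivWithinAt f (f' x) (Iic x) x)
    (hb : f b ≤ B b) (hB : ∀ x, HasDerivAt B (B' x) x)
    (bound : ∀ x ∈ Ioc a b, f x = B x → B' x < f' x) :
    ∀ x ∈ Icc a b, f x ≤ B x := by
  intro x hx
  have reflected : f (- -x) ≤ B (- -x) := by
    refine image_le_of_deriv_right_lt_deriv_boundary (f := fun s => f (-s))
      (f' := fun s => -f' (-s)) (B := fun s => B (-s)) (B' := fun s => -B' (-s))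
      (a := -b) (b := -a) ?_ (fun s hs => ?_) (by simpa using hb) (fun s => ?_)
      (fun s hs hfB => ?_) ⟨neg_le_neg hx.2, neg_le_neg hx.1⟩
    · exact hf.comp continuous_neg.continuousOn fun s hs => ⟨le_neg.2 hs.2, neg_le.2 hs.1⟩
    · have hleft := hf' (-s) ⟨lt_neg.2 hs.2, neg_le.2 hs.1⟩
      exact (hleft.comp s (hasDerivAt_neg s).hasDerivWithinAt
        fun r (hr : s ≤ r) => neg_le_neg hr).congr_deriv (mul_neg_one _)
    · exact ((hB (-s)).comp s (hasDerivAt_neg s)).congr_deriv (mul_neg_one _)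
    · exact neg_lt_neg (bound (-s) ⟨lt_neg.2 hs.2, neg_le.2 hs.1⟩ hfB)
  simpa using reflected

theorem image_le_const_of_deriv_left_nonneg {f f' : ℝ → ℝ} {a b z : ℝ}
    (hf : ContinuousOn f (Icc a b)) (hf' : ∀ x ∈ Ioc a b, HasDerivWithinAt f (f' x) (Iic x) x)
    (hb : f b ≤ z) (bound : ∀ x ∈ Ioc a b, z < f x → 0 ≤ f' x) :
    ∀ x ∈ Icc a b, f x ≤ z := by
  intro x hx
  -- A slightly tilted line is a strict barrier; let its slope `-δ` tend to `0`.
  have le_tilted : ∀ δ > 0, f x ≤ z + δ * (b - x + 1) := by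
    intro δ hδ
    refine image_le_of_deriv_left_gt_deriv_boundary (B := fun s => z + δ * (b - s + 1))
      (B' := fun _ => -δ) hf hf' (by simpa using hb.trans (le_add_of_nonneg_right hδ.le))
      (fun s => ?_) (fun s hs hfs => ?_) x hx
    · simpa using ((((hasDerivAt_id s).const_sub b).add_const 1).const_mul δ).const_add z
    · have : 0 < δ * (b - s + 1) := mul_pos hδ (by linarith [hs.2])
      linarith [bound s hs (by linarith)]
  refine le_of_forall_pos_le_add fun ε hε => ?_
  have hlen : 0 < b - x + 1 := by linarith [hx.2]
  simpa [div_mul_cancel₀ ε hlen.ne'] using le_tilted (ε / (b - x + 1)) (div_pos hε hlen)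

theorem isBackwardSolution_iff {F : ℝ → ℝ} (hF : Continuous F) {h T : ℝ} (hT : 0 ≤ T)
    {y : ℝ → ℝ} :
    IsBackwardSolution F h T y ↔
      y T = h ∧ IsIntegralCurveOn y (fun _ x => -F x) (Icc 0 T) := by
  have hTmem : T ∈ Icc 0 T := right_mem_Icc.2 hT
  have hcont : Continuous (Function.uncurry fun (_ : ℝ) x => -F x) := by fun_prop
  have picard_eq (t : ℝ) :
      ODE.picard (fun _ x => -F x) T h y t = h + ∫ s in t..T, F (y s) := by
    rw [ODE.picard_apply, intervalIntegral.integral_neg, ← intervalIntegral.integral_symm]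
  simp only [IsBackwardSolution, ← picard_eq]
  constructor
  · rintro ⟨hy, hfix⟩
    refine ⟨by simpa using hfix T hTmem, fun t ht => ?_⟩
    exact (ODE.hasDerivWithinAt_picard_Icc hTmem hcont.continuousOn hy
      (fun _ _ => mem_univ _) h ht).congr hfix (hfix t ht)
  · rintro ⟨rfl, hy⟩
    refine ⟨hy.continuousOn, fun t ht => ?_⟩
    have hsub : uIcc T t ⊆ Icc 0 T := uIcc_subset_Icc hTmem ht
    exact (ODE.picard_eq_of_hasDerivAt hcont.continuousOn (hy.mono hsub)
      (mapsTo_univ y _)).symm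

theorem exists_isBackwardSolution_of_lipschitz_of_bounded {G : ℝ → ℝ} {K L : NNReal}
    (hlip : LipschitzWith K G) (hbdd : ∀ x, ‖G x‖ ≤ L) (h : ℝ) {T : ℝ} (hT : 0 ≤ T) :
    ∃ y, IsBackwardSolution G h T y := by
  have hPL : IsPicardLindelof (fun _ x => -G x) (tmin := 0) (tmax := T)
      ⟨T, right_mem_Icc.2 hT⟩ h (L * T.toNNReal) 0 L K :=
    .of_time_independent (fun x _ => by simpa using hbdd x) hlip.neg.lipschitzOnWith
      (by simp [hT])
  obtain ⟨y, hyT, hy⟩ := hPL.exists_eq_forall_mem_Icc_hasDerivWithinAt₀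
  exact ⟨y, (isBackwardSolution_iff hlip.continuous hT).2 ⟨hyT, hy⟩⟩

namespace IsBackwardSolution

variable {F G : ℝ → ℝ} {h T z t : ℝ} {y : ℝ → ℝ}

theorem neg (hy : IsBackwardSolution F h T y) :
    IsBackwardSolution (fun x => -F (-x)) (-h) T (fun t => -y t) := by
  refine ⟨hy.1.neg, fun t ht => ?_⟩
  simp only [neg_neg, intervalIntegral.integral_neg]
  rw [hy.2 t ht, neg_add]

theorem congr (hy : IsBackwardSolution G h T y) (hFG : ∀ t ∈ Icc 0 T, F (y t) = G (y t)) :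
    IsBackwardSolution F h T y := by
  refine ⟨hy.1, fun t ht => (hy.2 t ht).trans ?_⟩
  congr 1
  refine intervalIntegral.integral_congr fun s hs => (hFG s ?_).symm
  exact uIcc_subset_Icc ht (right_mem_Icc.2 (ht.1.trans ht.2)) hs

theorem hasDerivWithinAt_Iic (hy : IsBackwardSolution F h T y) (hF : Continuous F)
    (ht : t ∈ Ioc 0 T) : HasDerivWithinAt y (-F (y t)) (Iic t) t :=
  (((isBackwardSolution_iff hF (ht.1.le.trans ht.2)).1 hy).2 t
    (Ioc_subset_Icc_self ht)).mono_of_mem_nhdsWithin (Icc_mem_nhdsLE_of_mem ht)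

theorem terminal_eq (hy : IsBackwardSolution F h T y) (hT : 0 ≤ T) : y T = h := by
  simpa using hy.2 T (right_mem_Icc.2 hT)

theorem le_of_nonpos_above (hy : IsBackwardSolution F h T y) (hF : Continuous F) (hz : h ≤ z)
    (hFz : ∀ x, z < x → F x ≤ 0) (ht : t ∈ Icc 0 T) : y t ≤ z :=
  image_le_const_of_deriv_left_nonneg hy.1 (fun _ hs => hy.hasDerivWithinAt_Iic hF hs)
    ((hy.terminal_eq (ht.1.trans ht.2)).trans_le hz)
    (fun s _ hs => neg_nonneg.2 (hFz (y s) hs)) t ht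

theorem ge_of_nonneg_below (hy : IsBackwardSolution F h T y) (hF : Continuous F) (hz : z ≤ h)
    (hFz : ∀ x, x < z → 0 ≤ F x) (ht : t ∈ Icc 0 T) : z ≤ y t :=
  neg_le_neg_iff.1 <| hy.neg.le_of_nonpos_above (by fun_prop) (neg_le_neg hz)
    (fun x hx => neg_nonpos.2 (hFz (-x) (neg_lt.1 hx))) ht

theorem terminal_le_of_pos (hy : IsBackwardSolution F h T y) (hF : Continuous F)
    (hFh : 0 < F h) (ht : t ∈ Icc 0 T) : h ≤ y t := by
  have hyT := hy.terminal_eq (ht.1.trans ht.2)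
  refine neg_le_neg_iff.1 <| image_le_of_deriv_left_gt_deriv_boundary (B := fun _ => -h)
    (B' := fun _ => 0) hy.1.neg (fun s hs => (hy.hasDerivWithinAt_Iic hF hs).neg)
    (neg_le_neg hyT.ge) (fun s => hasDerivAt_const s (-h)) (fun s _ hs => ?_) t ht
  simpa only [neg_neg, neg_inj.1 hs] using hFh

theorem horizon_lt_of_quadratic_growth (hy : IsBackwardSolution F h T y) (hF : Continuous F)
    (hT : 0 ≤ T) {C : ℝ} (hC : 0 < C) (hgrowth : ∀ x, h ≤ x → 1 + x ^ 2 ≤ C * F x) :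
    T < C * Real.pi := by
  have hFh : 0 < F h :=
    pos_of_mul_pos_right ((by positivity : 0 < 1 + h ^ 2).trans_le (hgrowth h le_rfl)) hC.le
  have hderiv : ∀ t ∈ Icc 0 T, HasDerivWithinAt (fun t => C * Real.arctan (y t) + t)
      (C * (1 / (1 + y t ^ 2) * -F (y t)) + 1) (Icc 0 T) t := fun t ht =>
    ((((isBackwardSolution_iff hF hT).1 hy).2 t ht).arctan.const_mul C).add
      (hasDerivWithinAt_id t _)
  have hanti : AntitoneOn (fun t => C * Real.arctan (y t) + t) (Icc 0 T) := by
    refine antitoneOn_of_hasDerivWithinAt_nonpos (convex_Icc 0 T)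
      (fun t ht => (hderiv t ht).continuousWithinAt)
      (fun t ht => (hderiv t (interior_subset ht)).mono interior_subset) fun t ht => ?_
    have hle : h ≤ y t := hy.terminal_le_of_pos hF hFh (interior_subset ht)
    have hspeed : 1 ≤ C * F (y t) / (1 + y t ^ 2) :=
      (one_le_div (by positivity)).2 (hgrowth (y t) hle)
    calc C * (1 / (1 + y t ^ 2) * -F (y t)) + 1
        = 1 - C * F (y t) / (1 + y t ^ 2) := by ring
      _ ≤ 0 := sub_nonpos.2 hspeed
  have hends := hanti (left_mem_Icc.2 hT) (right_mem_Icc.2 hT) hT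
  calc T ≤ C * (Real.arctan (y 0) - Real.arctan (y T)) := by
        simp only at hends
        linarith
    _ < C * Real.pi := mul_lt_mul_of_pos_left
        (by linarith [Real.arctan_lt_pi_div_two (y 0), Real.neg_pi_div_two_lt_arctan (y T)]) hC

end IsBackwardSolution

theorem exists_isBackwardSolution_of_barriers {F : ℝ → ℝ} {K : NNReal} {lo hi h T : ℝ}
    (hlip : LipschitzOnWith K F (Icc lo hi)) (hlo : lo ≤ h) (hhi : h ≤ hi)
    (hFlo : 0 ≤ F lo) (hFhi : F hi ≤ 0) (hT : 0 ≤ T) :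
    ∃ y, IsBackwardSolution F h T y := by
  have hle : lo ≤ hi := hlo.trans hhi
  let f : Icc lo hi → ℝ := (Icc lo hi).domRestrict F
  let G : ℝ → ℝ := IccExtend hle f
  have hGlip : LipschitzWith K G :=
    (hlip.to_restrict.comp (LipschitzWith.projIcc hle)).weaken (mul_one K).le
  obtain ⟨L, hL⟩ := isCompact_Icc.exists_bound_of_continuousOn hlip.continuousOn
  have hGbdd : ∀ x, ‖G x‖ ≤ L.toNNReal := fun x =>
    (hL _ (projIcc lo hi hle x).2).trans (Real.le_coe_toNNReal L)
  obtain ⟨y, hy⟩ := exists_isBackwardSolution_of_lipschitz_of_bounded hGlip hGbdd h hT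
  have hyhi : ∀ t ∈ Icc 0 T, y t ≤ hi := fun t ht =>
    hy.le_of_nonpos_above hGlip.continuous hhi
      (fun x hx => (IccExtend_of_right_le hle f hx.le).trans_le hFhi) ht
  have hylo : ∀ t ∈ Icc 0 T, lo ≤ y t := fun t ht =>
    hy.ge_of_nonneg_below hGlip.continuous hlo
      (fun x hx => hFlo.trans_eq (IccExtend_of_le_left hle f hx.le).symm) ht
  exact ⟨y, hy.congr fun t ht => (IccExtend_of_mem hle f ⟨hylo t ht, hyhi t ht⟩).symm⟩

theorem globallySolvable_of_barriers {F : ℝ → ℝ} (hF : LocallyLipschitz F) {lo hi h : ℝ}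
    (hlo : lo ≤ h) (hhi : h ≤ hi) (hFlo : 0 ≤ F lo) (hFhi : F hi ≤ 0) :
    GloballySolvable F h := by
  obtain ⟨K, hK⟩ := (hF.locallyLipschitzOn (s := Icc lo hi)).exists_lipschitzOnWith_of_compact
    isCompact_Icc
  exact fun T hT => exists_isBackwardSolution_of_barriers hK hlo hhi hFlo hFhi hT.le

theorem globallySolvable_affine (a b h : ℝ) : GloballySolvable (fun x => a * x + b) h := by
  intro T hT
  let y : ℝ → ℝ := fun t => h + (a * h + b) * ∫ s in (0 : ℝ)..(T - t), Real.exp (a * s)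
  refine ⟨y, (isBackwardSolution_iff (by fun_prop) hT.le).2
    ⟨by simp [y], fun t _ => HasDerivAt.hasDerivWithinAt ?_⟩⟩
  have hint : a * ∫ s in (0 : ℝ)..(T - t), Real.exp (a * s) = Real.exp (a * (T - t)) - 1 := by
    simp
  have hexp : Continuous fun s => Real.exp (a * s) := by fun_prop
  have hderiv : HasDerivAt y ((a * h + b) * (Real.exp (a * (T - t)) * -1)) t :=
    (((hexp.integral_hasStrictDerivAt 0 (T - t)).hasDerivAt.comp t
      ((hasDerivAt_id t).const_sub T)).const_mul (a * h + b)).const_add h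
  refine hderiv.congr_deriv ?_
  linear_combination (a * h + b) * hint

theorem isBigO_principal_Ici_of_isBigO_atTop {f g : ℝ → ℝ} {a : ℝ}
    (hf : ContinuousOn f (Ici a)) (hg : ContinuousOn g (Ici a)) (hg0 : ∀ x ∈ Ici a, g x ≠ 0)
    (hfg : f =O[atTop] g) : f =O[𝓟 (Ici a)] g := by
  obtain ⟨C, hC⟩ := hfg.bound
  obtain ⟨M, hM⟩ := eventually_atTop.1 hC
  have hcompact : f =O[𝓟 (Icc a M)] g :=
    ((hf.mono Icc_subset_Ici_self).isBigO_principal isCompact_Icc (c := (1 : ℝ)) (by simp)).trans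
      ((hg.mono Icc_subset_Ici_self).isBigO_rev_principal isCompact_Icc
        (fun x hx => hg0 x hx.1) 1)
  have htail : f =O[𝓟 (Ici M)] g := isBigO_principal.2 ⟨C, hM⟩
  refine (hcompact.sup htail).mono ?_
  rw [sup_principal, principal_mono]
  exact fun x hx => (le_total x M).imp (fun hxM => ⟨hx, hxM⟩) id

namespace GloballySolvable

theorem neg {F : ℝ → ℝ} {h : ℝ} (hsol : GloballySolvable F h) :
    GloballySolvable (fun x => -F (-x)) (-h) := fun T hT =>
  let ⟨y, hy⟩ := hsol T hT
  ⟨fun t => -y t, hy.neg⟩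

theorem not_one_add_sq_isBigO_atTop {F : ℝ → ℝ} {h : ℝ} (hsol : GloballySolvable F h)
    (hF : Continuous F) (hpos : ∀ x, h ≤ x → 0 < F x) :
    ¬ (fun x => 1 + x ^ 2) =O[atTop] F := by
  intro hO
  obtain ⟨C, hC, hbound⟩ := (isBigO_principal_Ici_of_isBigO_atTop (a := h) (by fun_prop)
    hF.continuousOn (fun x hx => (hpos x hx).ne') hO).exists_pos
  have hgrowth : ∀ x, h ≤ x → 1 + x ^ 2 ≤ C * F x := fun x hx => by
    simpa only [Real.norm_of_nonneg (by positivity : 0 ≤ 1 + x ^ 2),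
      Real.norm_of_nonneg (hpos x hx).le] using isBigOWith_principal.1 hbound x hx
  have hT : 0 < C * Real.pi := mul_pos hC Real.pi_pos
  obtain ⟨y, hy⟩ := hsol (C * Real.pi) hT
  exact (hy.horizon_lt_of_quadratic_growth hF hT.le hC hgrowth).false

theorem exists_root_ge {P : ℝ[X]} {h : ℝ}
    (hsol : GloballySolvable (fun x => P.eval x) h) (hdeg : 1 < P.natDegree)
    (hPh : 0 ≤ P.eval h) : ∃ z, h ≤ z ∧ P.eval z = 0 := by
  by_contra! hroot
  have hpos : ∀ x, h ≤ x → 0 < P.eval x := by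
    intro x hx
    by_contra! hPx
    obtain ⟨z, hz, hPz⟩ := intermediate_value_Icc' hx P.continuousOn ⟨hPx, hPh⟩
    exact hroot z hz.1 hPz
  have hquad : (1 + X ^ 2 : ℝ[X]).degree ≤ P.degree := calc
    (1 + X ^ 2 : ℝ[X]).degree ≤ 2 := by compute_degree
    _ ≤ P.natDegree := mod_cast hdeg
    _ = P.degree := (degree_eq_natDegree (ne_zero_of_natDegree_gt hdeg)).symm
  refine hsol.not_one_add_sq_isBigO_atTop P.continuous hpos ?_
  simpa using isBigO_atTop_of_degree_le _ _ hquad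

theorem exists_root_le {P : ℝ[X]} {h : ℝ}
    (hsol : GloballySolvable (fun x => P.eval x) h) (hdeg : 1 < P.natDegree)
    (hPh : P.eval h ≤ 0) : ∃ z, z ≤ h ∧ P.eval z = 0 := by
  have hsol' : GloballySolvable (fun x => (-P.comp (-X)).eval x) (-h) := by
    simpa using hsol.neg
  obtain ⟨z, hz, hPz⟩ := hsol'.exists_root_ge (by simpa [natDegree_comp] using hdeg)
    (by simpa using hPh)
  exact ⟨-z, neg_le.1 hz, by simpa using hPz⟩

end GloballySolvable

theorem stmt1_general (P : ℝ[X]) (h : ℝ) :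
    GloballySolvable (fun x => P.eval x) h ↔
      ((0 ≤ P.eval h ∧ ∃ z : ℝ, h ≤ z ∧ P.eval z = 0) ∨
       (P.eval h ≤ 0 ∧ ∃ z : ℝ, z ≤ h ∧ P.eval z = 0) ∨
       P.natDegree ≤ 1) := by
  have hlip : LocallyLipschitz fun x => P.eval x := by
    simpa using (P.contDiff_aeval (𝕜 := ℝ) 1).locallyLipschitz
  constructor
  · intro hsol
    rcases le_or_gt P.natDegree 1 with hdeg | hdeg
    · exact .inr (.inr hdeg)
    rcases le_total 0 (P.eval h) with hPh | hPh
    · exact .inl ⟨hPh, hsol.exists_root_ge hdeg hPh⟩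
    · exact .inr (.inl ⟨hPh, hsol.exists_root_le hdeg hPh⟩)
  · rintro (⟨hPh, z, hz, hPz⟩ | ⟨hPh, z, hz, hPz⟩ | hdeg)
    · exact globallySolvable_of_barriers hlip le_rfl hz hPh hPz.le
    · exact globallySolvable_of_barriers hlip hz le_rfl hPz.ge hPh
    · obtain ⟨a, b, rfl⟩ := exists_eq_X_add_C_of_natDegree_le_one hdeg
      simpa using globallySolvable_affine a b h

theorem natDegree_cubic_le_one_iff {R : Type*} [Semiring R] (p : Cubic R) :
    p.toPoly.natDegree ≤ 1 ↔ p.a = 0 ∧ p.b = 0 := by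
  constructor
  · intro hdeg
    exact ⟨Cubic.coeff_eq_a.symm.trans (coeff_eq_zero_of_natDegree_lt (by lia)),
      Cubic.coeff_eq_b.symm.trans (coeff_eq_zero_of_natDegree_lt (by lia))⟩
  · rintro ⟨ha, hb⟩
    exact natDegree_le_of_degree_le (Cubic.degree_of_b_eq_zero ha hb)

/-- Characterization of global solvability of the backward ODE with cubic
generator (Theorem 5.3). -/
theorem stmt1
    (f1 a1 a2 a3 h : ℝ) (F : ℝ → ℝ)
    (hF : ∀ y : ℝ, F y = f1 + a1 * y + a2 * y ^ 2 + a3 * y ^ 3) :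
    (∀ T : ℝ, 0 < T → ∃ y : ℝ → ℝ, ContinuousOn y (Icc 0 T) ∧
        ∀ t ∈ Icc (0:ℝ) T, y t = h + ∫ s in t..T, F (y s)) ↔
      ((0 ≤ F h ∧ ∃ z : ℝ, h ≤ z ∧ F z = 0) ∨
       (F h ≤ 0 ∧ ∃ z : ℝ, z ≤ h ∧ F z = 0) ∨
       (a3 = 0 ∧ a2 = 0)) := by
  let p : Cubic ℝ := ⟨a3, a2, a1, f1⟩
  obtain rfl : F = fun x => p.toPoly.eval x := by
    funext x
    simp only [hF, p, Cubic.toPoly, eval_add, eval_mul, eval_C, eval_pow, eval_X]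
    ring
  have hdeg : p.toPoly.natDegree ≤ 1 ↔ a3 = 0 ∧ a2 = 0 := natDegree_cubic_le_one_iff p
  rw [← hdeg]
  exact stmt1_general p.toPoly h
end

section
/- Let T > 0 and let F̲, F̄ : [0,T] × ℝ → ℝ satisfy F̲ ≤ F̄ pointwise, with t ↦ F̄(t,y) and t ↦ F̲(t,y) Lebesgue measurable for each y, and assume that for every M > 0 there exist constants L_M, K_M such that for all t ∈ [0,T] both F̄(t,·) and F̲(t,·) are L_M-Lipschitz on [−M, M] and bounded in absolute value by K_M on [−M, M]. Let h̲ ≤ h̄ be real numbers. Suppose there exist a constant λ ≥ h̄ with F̄(t, λ) ≤ 0 for all t, and constants C₁ > 0, C₀ ≥ 0, ε > 0 such that F̲(t,y) ≥ 2εy³ + C₁y − C₀ for all t and all y ≤ 0, and 2εC₂³ ≤ 1, where C₂ := e^{C₁T}·max(−h̲, 0) + ((C₀+1)/C₁)(e^{C₁T} − 1). Then the two dominating backward ODEs ȳ(t) = h̄ + ∫_t^T F̄(s, ȳ(s)) ds and y̲(t) = h̲ + ∫_t^T F̲(s, y̲(s)) ds admit continuous solutions ȳ, y̲ on [0,T]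 with −C₂ ≤ y̲(t) ≤ λ and −C₂ ≤ ȳ(t) ≤ λ for all t ∈ [0,T]. -/
open MeasureTheory Set

/-!
The function `w t = -gronwallBound (max (-hl) 0) C1 (C0 + 1) (T - t)` solves the linear equation
`w' = -(C1 * w - (C0 + 1))`, and the smallness of `ε` makes the spare `1` absorb the cubic term, so
`w` is a subsolution of both backward equations; the constant `lam` is a supersolution of both.
Truncating a generator between `w` and `lam` makes it globally Lipschitz, so Picard iteration
solves the truncated equation. Its solution cannot leave `[w, lam]`, because outside this region
the truncated generator is frozen at the values it takes along the barrier. Hence the truncation is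
inactive along the solution, which therefore solves the original equation.
-/

open scoped NNReal

section Caratheodory

theorem aestronglyMeasurable_comp_of_continuous_of_stronglyMeasurable {α X E : Type*}
    [MeasurableSpace α] [TopologicalSpace X] [TopologicalSpace.MetrizableSpace X]
    [SecondCountableTopology X] [MeasurableSpace X] [OpensMeasurableSpace X]
    [TopologicalSpace E] [TopologicalSpace.PseudoMetrizableSpace E] [Zero E]
    {μ : Measure α} {S : Set α} {F : α → X → E} {u : α → X} (hS : MeasurableSet S)
    (hmeas : ∀ x, StronglyMeasurable fun t => F t x) (hcont : ∀ t ∈ S, Continuous (F t))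
    (hu : AEMeasurable u (μ.restrict S)) :
    AEStronglyMeasurable (fun t => F t (u t)) (μ.restrict S) := by
  have hjoint : StronglyMeasurable
      (Function.uncurry fun (x : X) (t : α) => S.indicator (fun t => F t x) t) := by
    refine stronglyMeasurable_uncurry_of_continuous_of_stronglyMeasurable (fun t => ?_)
      fun x => (hmeas x).indicator hS
    by_cases ht : t ∈ S
    · simpa only [indicator_of_mem ht] using hcont t ht
    · simpa only [indicator_of_notMem ht] using continuous_const
  refine (hjoint.aestronglyMeasurable.comp_aemeasurable (hu.prodMk aemeasurable_id)).congr ?_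
  filter_upwards [ae_restrict_mem hS] with t ht
  exact indicator_of_mem ht fun t => F t (u t)

/-- The regularity imposed on a generator `F t y` for times `t ∈ S`: measurable in `t`, and both
Lipschitz and bounded in `y` on each interval `[-M, M]`, uniformly in `t ∈ S`. -/
structure IsLocallyLipschitzGenerator (F : ℝ → ℝ → ℝ) (S : Set ℝ) : Prop where
  measurable : ∀ y, Measurable fun t => F t y
  exists_lipschitzOnWith : ∀ M, 0 < M → ∃ L : ℝ≥0, ∀ t ∈ S, LipschitzOnWith L (F t) (Icc (-M) M)
  exists_abs_le : ∀ M, 0 < M → ∃ K : ℝ, ∀ t ∈ S, ∀ y ∈ Icc (-M) M, |F t y| ≤ K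

theorem exists_pos_mapsTo_Icc_of_continuousOn {X : Type*} [TopologicalSpace X] {S : Set X}
    {u : X → ℝ} (hS : IsCompact S) (hu : ContinuousOn u S) :
    ∃ M, 0 < M ∧ MapsTo u S (Icc (-M) M) := by
  obtain ⟨M, hM, hbound⟩ := (hS.image_of_continuousOn hu).isBounded.exists_pos_norm_le
  exact ⟨M, hM, fun t ht => abs_le.1 (hbound _ (mem_image_of_mem u ht))⟩

namespace IsLocallyLipschitzGenerator

variable {F : ℝ → ℝ → ℝ} {S : Set ℝ} {u : ℝ → ℝ} {t : ℝ}

theorem continuous (hF : IsLocallyLipschitzGenerator F S) (ht : t ∈ S) : Continuous (F t) := by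
  refine continuous_iff_continuousAt.2 fun y => ?_
  obtain ⟨L, hL⟩ := hF.exists_lipschitzOnWith (|y| + 1) (by positivity)
  exact (hL t ht).continuousOn.continuousAt
    (Icc_mem_nhds (by linarith [neg_abs_le y]) (by linarith [le_abs_self y]))

theorem integrableOn_comp (hF : IsLocallyLipschitzGenerator F S) (hS : IsCompact S)
    (hu : ContinuousOn u S) : IntegrableOn (fun t => F t (u t)) S := by
  obtain ⟨M, hM, huM⟩ := exists_pos_mapsTo_Icc_of_continuousOn hS hu
  obtain ⟨K, hK⟩ := hF.exists_abs_le M hM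
  have hmeas : AEStronglyMeasurable (fun t => F t (u t)) (volume.restrict S) :=
    aestronglyMeasurable_comp_of_continuous_of_stronglyMeasurable hS.measurableSet
      (fun y => (hF.measurable y).stronglyMeasurable) (fun _ ht => hF.continuous ht)
      (hu.aemeasurable hS.measurableSet)
  refine IntegrableOn.of_bound hS.measure_lt_top hmeas K ?_
  filter_upwards [ae_restrict_mem hS.measurableSet] with t ht using hK t ht _ (huM ht)

end IsLocallyLipschitzGenerator

end Caratheodory

section BackwardPicard

variable {E : Type*} [NormedAddCommGroup E] [NormedSpace ℝ E] {a T : ℝ} {h : E}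
  {F : ℝ → E → E} {y : ℝ → E}

/-- `y` is a continuous solution on `[a, T]` of the backward equation `y' = -F t y` with terminal
value `h`, in integral form. -/
structure IsBackwardSolution_s8 (F : ℝ → E → E) (a T : ℝ) (h : E) (y : ℝ → E) : Prop where
  continuousOn : ContinuousOn y (Icc a T)
  eq_add_integral : ∀ t ∈ Icc a T, y t = h + ∫ s in t..T, F s (y s)

theorem IsBackwardSolution_s8.eq_terminal (hy : IsBackwardSolution_s8 F a T h y) (haT : a ≤ T) :
    y T = h := by
  simpa using hy.eq_add_integral T (right_mem_Icc.2 haT)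

theorem IsBackwardSolution_s8.eq_add_integral_of_le (hy : IsBackwardSolution_s8 F a T h y)
    (hint : IntegrableOn (fun s => F s (y s)) (Icc a T)) {s t : ℝ} (hs : s ∈ Icc a T)
    (ht : t ∈ Icc s T) : y s = y t + ∫ r in s..t, F r (y r) := by
  have hta : a ≤ t := hs.1.trans ht.1
  have hint_of_subset : ∀ p q : ℝ, a ≤ p → p ≤ q → q ≤ T →
      IntervalIntegrable (fun r => F r (y r)) volume p q := fun p q hp hpq hq =>
    (intervalIntegrable_iff_integrableOn_Icc_of_le hpq).2 (hint.mono_set (Icc_subset_Icc hp hq))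
  rw [hy.eq_add_integral s hs, hy.eq_add_integral t ⟨hta, ht.2⟩,
    ← intervalIntegral.integral_add_adjacent_intervals (hint_of_subset s t hs.1 ht.1 ht.2)
      (hint_of_subset t T hta ht.2 le_rfl)]
  abel

theorem IsBackwardSolution_s8.congr {G : ℝ → E → E} (hy : IsBackwardSolution_s8 F a T h y)
    (hFG : ∀ t ∈ Icc a T, F t (y t) = G t (y t)) : IsBackwardSolution_s8 G a T h y where
  continuousOn := hy.continuousOn
  eq_add_integral t ht := by
    rw [hy.eq_add_integral t ht]
    congr 1
    exact intervalIntegral.integral_congr_Ioo_of_le ht.2 fun s hs =>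
      hFG s ⟨ht.1.trans hs.1.le, hs.2.le⟩

/-- The Picard operator `z ↦ (t ↦ h + ∫ s in t..T, F s (z s))` of the backward equation on
`C([a, T], E)`; the integrand sees `z` through its constant extension to `ℝ`. -/
noncomputable def backwardPicard (haT : a ≤ T) (h : E) (F : ℝ → E → E)
    (hint : ∀ u : ℝ → E, Continuous u → IntegrableOn (fun s => F s (u s)) (Icc a T))
    (z : C(Icc a T, E)) : C(Icc a T, E) where
  toFun t := h + ∫ s in (t : ℝ)..T, F s (IccExtend haT z s)
  continuous_toFun := by
    have hintegrable : IntegrableOn (fun s => F s (IccExtend haT z s)) (uIcc a T) := by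
      simpa only [uIcc_of_le haT] using hint _ z.continuous.Icc_extend'
    have hcont := intervalIntegral.continuousOn_primitive_interval_left hintegrable
    rw [uIcc_of_le haT] at hcont
    exact continuous_const.add hcont.domRestrict

section Contraction

open scoped Nat

variable {L : ℝ≥0} (haT : a ≤ T)
  (hint : ∀ u : ℝ → E, Continuous u → IntegrableOn (fun s => F s (u s)) (Icc a T))

theorem integral_mul_pow_div_factorial (L t T : ℝ) (n : ℕ) :
    ∫ s in t..T, L * ((L * (T - s)) ^ n / n !) = (L * (T - t)) ^ (n + 1) / (n + 1)! := by
  calc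
    _ = ∫ s in t..T, L ^ (n + 1) / n ! * (T - s) ^ n :=
      intervalIntegral.integral_congr fun s _ => by simp only [mul_pow]; ring
    _ = L ^ (n + 1) / n ! * ((T - t) ^ (n + 1) / (n + 1)) := by
      rw [intervalIntegral.integral_const_mul,
        intervalIntegral.integral_comp_sub_left (fun x => x ^ n), integral_pow]
      simp
    _ = _ := by
      rw [Nat.factorial_succ, mul_pow]
      push_cast
      field_simp

theorem dist_backwardPicard_apply_le (hlip : ∀ s ∈ Icc a T, LipschitzWith L (F s))
    (z z' : C(Icc a T, E)) {ψ : ℝ → ℝ} (hψ : Continuous ψ)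
    (hzψ : ∀ s : Icc a T, dist (z s) (z' s) ≤ ψ s) (t : Icc a T) :
    dist (backwardPicard haT h F hint z t) (backwardPicard haT h F hint z' t) ≤
      ∫ s in (t : ℝ)..T, L * ψ s := by
  have hintegrable : ∀ x : C(Icc a T, E),
      IntervalIntegrable (fun s => F s (IccExtend haT x s)) volume t T := fun x =>
    (intervalIntegrable_iff_integrableOn_Icc_of_le t.2.2).2
      ((hint _ x.continuous.Icc_extend').mono_set (Icc_subset_Icc_left t.2.1))
  change dist (h + _) (h + _) ≤ _
  rw [dist_add_left, dist_eq_norm,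
    ← intervalIntegral.integral_sub (hintegrable z) (hintegrable z')]
  refine intervalIntegral.norm_integral_le_of_norm_le t.2.2 (.of_forall fun s hs => ?_)
    (Continuous.intervalIntegrable (by fun_prop) _ _)
  have hsI : s ∈ Icc a T := ⟨t.2.1.trans hs.1.le, hs.2⟩
  rw [← dist_eq_norm, IccExtend_of_mem haT _ hsI, IccExtend_of_mem haT _ hsI]
  exact ((hlip s hsI).dist_le_mul _ _).trans (by gcongr; exact hzψ ⟨s, hsI⟩)

theorem dist_iterate_backwardPicard_apply_le (hlip : ∀ s ∈ Icc a T, LipschitzWith L (F s))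
    (z z' : C(Icc a T, E)) (n : ℕ) (t : Icc a T) :
    dist ((backwardPicard haT h F hint)^[n] z t) ((backwardPicard haT h F hint)^[n] z' t) ≤
      (L * (T - t)) ^ n / n ! * dist z z' := by
  induction n generalizing t with
  | zero => simpa using ContinuousMap.dist_apply_le_dist t
  | succ n ih =>
    rw [Function.iterate_succ_apply', Function.iterate_succ_apply']
    refine (dist_backwardPicard_apply_le haT hint hlip _ _
      (ψ := fun s => (L * (T - s)) ^ n / n ! * dist z z') (by fun_prop) ih t).trans_eq ?_
    simp only [← mul_assoc (L : ℝ), intervalIntegral.integral_mul_const,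
      integral_mul_pow_div_factorial]

theorem exists_contractingWith_iterate_backwardPicard
    (hlip : ∀ s ∈ Icc a T, LipschitzWith L (F s)) :
    ∃ (n : ℕ) (K : ℝ≥0), ContractingWith K (backwardPicard haT h F hint)^[n] := by
  obtain ⟨n, hn⟩ := ((FloorSemiring.tendsto_pow_div_factorial_atTop
    (L * (T - a))).eventually_lt_const zero_lt_one).exists
  have hK : 0 ≤ (L * (T - a)) ^ n / n ! :=
    div_nonneg (pow_nonneg (mul_nonneg L.2 (sub_nonneg.2 haT)) n) (Nat.cast_nonneg _)
  refine ⟨n, ⟨_, hK⟩, hn, LipschitzWith.of_dist_le_mul fun z z' =>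
    (ContinuousMap.dist_le (mul_nonneg hK dist_nonneg)).2 fun t =>
      (dist_iterate_backwardPicard_apply_le haT hint hlip z z' n t).trans ?_⟩
  have hTt : 0 ≤ T - t := sub_nonneg.2 t.2.2
  change _ ≤ (L * (T - a)) ^ n / n ! * dist z z'
  gcongr
  exact t.2.1

end Contraction

theorem exists_isBackwardSolution_of_lipschitzWith [CompleteSpace E] {L : ℝ≥0} (haT : a ≤ T)
    (hint : ∀ u : ℝ → E, Continuous u → IntegrableOn (fun s => F s (u s)) (Icc a T))
    (hlip : ∀ s ∈ Icc a T, LipschitzWith L (F s)) : ∃ y, IsBackwardSolution_s8 F a T h y := by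
  obtain ⟨n, K, hcontr⟩ := exists_contractingWith_iterate_backwardPicard (h := h) haT hint hlip
  set z := ContractingWith.fixedPoint _ hcontr
  have hz : backwardPicard haT h F hint z = z := hcontr.isFixedPt_fixedPoint_iterate
  refine ⟨IccExtend haT z, z.continuous.Icc_extend'.continuousOn, fun t ht => ?_⟩
  rw [IccExtend_of_mem haT _ ht]
  exact (DFunLike.congr_fun hz ⟨t, ht⟩).symm

end BackwardPicard

section Comparison

theorem le_on_Icc_of_backward_propagation {α β : Type*} [LinearOrder α] [TopologicalSpace α]
    [OrderClosedTopology α] [CompactIccSpace α] [LinearOrder β] [TopologicalSpace β]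
    [OrderClosedTopology β] {a b : α} {f g : α → β} (hf : ContinuousOn f (Icc a b))
    (hg : ContinuousOn g (Icc a b)) (hb : f b ≤ g b)
    (hprop : ∀ s ∈ Icc a b, ∀ t ∈ Icc s b, (∀ r ∈ Ico s t, g r < f r) → f t ≤ g t → f s ≤ g s) :
    ∀ t ∈ Icc a b, f t ≤ g t := by
  intro s hs
  have hsub : Icc s b ⊆ Icc a b := Icc_subset_Icc_left hs.1
  have hclosed : IsClosed {r | r ∈ Icc s b ∧ f r ≤ g r} :=
    isClosed_Icc.isClosed_le (hf.mono hsub) (hg.mono hsub)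
  obtain ⟨t, ⟨ht, hft⟩, hmin⟩ :=
    (isCompact_Icc.of_isClosed_subset hclosed fun _ hr => hr.1).exists_isLeast
      ⟨b, right_mem_Icc.2 hs.2, hb⟩
  refine hprop s hs t ht (fun r hr => not_le.1 fun hfr => ?_) hft
  exact (hmin ⟨⟨hr.1, hr.2.le.trans ht.2⟩, hfr⟩).not_gt hr.2

variable {F : ℝ → ℝ → ℝ} {a T h : ℝ} {w v y : ℝ → ℝ}

/-- `w` is a continuous subsolution on `[a, T]` of the backward equation with generator `F`: the
integral form of `w' ≥ -F t w`. -/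
structure IsBackwardSubsolution (F : ℝ → ℝ → ℝ) (a T : ℝ) (w : ℝ → ℝ) : Prop where
  continuousOn : ContinuousOn w (Icc a T)
  le_add_integral : ∀ s ∈ Icc a T, ∀ t ∈ Icc s T, w s ≤ w t + ∫ r in s..t, F r (w r)

/-- `v` is a continuous supersolution on `[a, T]` of the backward equation with generator `F`: the
integral form of `v' ≤ -F t v`. -/
structure IsBackwardSupersolution (F : ℝ → ℝ → ℝ) (a T : ℝ) (v : ℝ → ℝ) : Prop where
  continuousOn : ContinuousOn v (Icc a T)
  add_integral_le : ∀ s ∈ Icc a T, ∀ t ∈ Icc s T, v t + ∫ r in s..t, F r (v r) ≤ v s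

theorem isBackwardSupersolution_const {c : ℝ} (hc : ∀ t ∈ Icc a T, F t c ≤ 0) :
    IsBackwardSupersolution F a T fun _ => c where
  continuousOn := continuousOn_const
  add_integral_le s hs t ht := by
    have hnonneg : 0 ≤ ∫ r in s..t, -F r c :=
      intervalIntegral.integral_nonneg ht.1 fun r hr =>
        neg_nonneg.2 (hc r ⟨hs.1.trans hr.1, hr.2.trans ht.2⟩)
    rw [intervalIntegral.integral_neg] at hnonneg
    linarith

theorem isBackwardSubsolution_of_hasDerivAt {w' : ℝ → ℝ}
    (hint : IntegrableOn (fun t => F t (w t)) (Icc a T))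
    (hderiv : ∀ t ∈ Icc a T, HasDerivAt w (w' t) t)
    (hle : ∀ t ∈ Icc a T, -w' t ≤ F t (w t)) : IsBackwardSubsolution F a T w where
  continuousOn t ht := (hderiv t ht).continuousAt.continuousWithinAt
  le_add_integral s hs t ht := by
    have hsub : Icc s t ⊆ Icc a T := Icc_subset_Icc hs.1 ht.2
    have hIoo : Ioo s t ⊆ Icc a T := Ioo_subset_Icc_self.trans hsub
    have hftc : ∫ r in s..t, -F r (w r) ≤ w t - w s :=
      intervalIntegral.integral_le_sub_of_hasDeriv_right_of_le ht.1
        (fun r hr => (hderiv r (hsub hr)).continuousAt.continuousWithinAt)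
        (fun r hr => (hderiv r (hIoo hr)).hasDerivWithinAt) (hint.mono_set hsub).neg
        (fun r hr => neg_le.1 (hle r (hIoo hr)))
    rw [intervalIntegral.integral_neg] at hftc
    linarith

/-- The generator `F` with its state variable truncated to `[w t, v t]`. -/
def truncatedGenerator (F : ℝ → ℝ → ℝ) (w v : ℝ → ℝ) (t y : ℝ) : ℝ :=
  F t (max (w t) (min y (v t)))

theorem truncatedGenerator_of_mem {t y : ℝ} (hy : y ∈ Icc (w t) (v t)) :
    truncatedGenerator F w v t y = F t y := by
  rw [truncatedGenerator, min_eq_left hy.2, max_eq_right hy.1]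

theorem truncatedGenerator_of_le {t y : ℝ} (hy : y ≤ w t) :
    truncatedGenerator F w v t y = F t (w t) := by
  rw [truncatedGenerator, max_eq_left ((min_le_left _ _).trans hy)]

theorem truncatedGenerator_of_ge {t y : ℝ} (hwv : w t ≤ v t) (hy : v t ≤ y) :
    truncatedGenerator F w v t y = F t (v t) := by
  rw [truncatedGenerator, min_eq_right hy, max_eq_right hwv]

theorem IsLocallyLipschitzGenerator.integrableOn_truncatedGenerator_comp {S : Set ℝ}
    (hF : IsLocallyLipschitzGenerator F S) (hS : IsCompact S) (hw : ContinuousOn w S)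
    (hv : ContinuousOn v S) (hy : ContinuousOn y S) :
    IntegrableOn (fun t => truncatedGenerator F w v t (y t)) S :=
  hF.integrableOn_comp hS (hw.sup (hy.inf hv))

theorem IsLocallyLipschitzGenerator.exists_lipschitzWith_truncatedGenerator {S : Set ℝ}
    (hF : IsLocallyLipschitzGenerator F S) (hS : IsCompact S) (hw : ContinuousOn w S)
    (hv : ContinuousOn v S) : ∃ L : ℝ≥0, ∀ t ∈ S, LipschitzWith L (truncatedGenerator F w v t) := by
  obtain ⟨M, hM, hwM⟩ := exists_pos_mapsTo_Icc_of_continuousOn hS hw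
  obtain ⟨N, -, hvN⟩ := exists_pos_mapsTo_Icc_of_continuousOn hS hv
  obtain ⟨L, hL⟩ := hF.exists_lipschitzOnWith (max M N) (lt_max_of_lt_left hM)
  refine ⟨L * 1, fun t ht => lipschitzOnWith_univ.1 <| (hL t ht).comp
    (((LipschitzWith.id.min_const (v t)).const_max (w t)).lipschitzOnWith) fun y _ => ⟨?_, ?_⟩⟩
  · exact (neg_le_neg (le_max_left M N)).trans ((hwM ht).1.trans (le_max_left _ _))
  · exact max_le_max (hwM ht).2 ((min_le_right _ _).trans (hvN ht).2)

theorem IsBackwardSubsolution.le_of_truncatedGenerator (hw : IsBackwardSubsolution F a T w)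
    (hy : IsBackwardSolution_s8 (truncatedGenerator F w v) a T h y)
    (hint : IntegrableOn (fun t => truncatedGenerator F w v t (y t)) (Icc a T)) (hwT : w T ≤ h) :
    ∀ t ∈ Icc a T, w t ≤ y t := by
  intro t₀ ht₀
  have hyT : y T = h := hy.eq_terminal (ht₀.1.trans ht₀.2)
  refine le_on_Icc_of_backward_propagation hw.continuousOn hy.continuousOn (hyT ▸ hwT)
    (fun s hs t ht hlt hwt => ?_) t₀ ht₀
  calc w s ≤ w t + ∫ r in s..t, F r (w r) := hw.le_add_integral s hs t ht
    _ = w t + ∫ r in s..t, truncatedGenerator F w v r (y r) := by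
      rw [intervalIntegral.integral_congr_Ioo_of_le ht.1 fun r hr =>
        (truncatedGenerator_of_le (hlt r (Ioo_subset_Ico_self hr)).le).symm]
    _ ≤ y t + ∫ r in s..t, truncatedGenerator F w v r (y r) := by gcongr
    _ = y s := (hy.eq_add_integral_of_le hint hs ht).symm

theorem IsBackwardSupersolution.le_of_truncatedGenerator (hv : IsBackwardSupersolution F a T v)
    (hwv : ∀ t ∈ Icc a T, w t ≤ v t)
    (hy : IsBackwardSolution_s8 (truncatedGenerator F w v) a T h y)
    (hint : IntegrableOn (fun t => truncatedGenerator F w v t (y t)) (Icc a T)) (hvT : h ≤ v T) :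
    ∀ t ∈ Icc a T, y t ≤ v t := by
  intro t₀ ht₀
  have hyT : y T = h := hy.eq_terminal (ht₀.1.trans ht₀.2)
  refine le_on_Icc_of_backward_propagation hy.continuousOn hv.continuousOn (hyT ▸ hvT)
    (fun s hs t ht hlt hvt => ?_) t₀ ht₀
  calc y s = y t + ∫ r in s..t, truncatedGenerator F w v r (y r) :=
        hy.eq_add_integral_of_le hint hs ht
    _ ≤ v t + ∫ r in s..t, truncatedGenerator F w v r (y r) := by gcongr
    _ = v t + ∫ r in s..t, F r (v r) := by
      rw [intervalIntegral.integral_congr_Ioo_of_le ht.1 fun r hr =>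
        truncatedGenerator_of_ge (hwv r ⟨hs.1.trans hr.1.le, hr.2.le.trans ht.2⟩)
          (hlt r (Ioo_subset_Ico_self hr)).le]
    _ ≤ v s := hv.add_integral_le s hs t ht

theorem exists_isBackwardSolution_mem_Icc (haT : a ≤ T)
    (hF : IsLocallyLipschitzGenerator F (Icc a T)) (hw : IsBackwardSubsolution F a T w)
    (hv : IsBackwardSupersolution F a T v) (hwv : ∀ t ∈ Icc a T, w t ≤ v t)
    (hwT : w T ≤ h) (hvT : h ≤ v T) :
    ∃ y, IsBackwardSolution_s8 F a T h y ∧ ∀ t ∈ Icc a T, y t ∈ Icc (w t) (v t) := by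
  have hint {u : ℝ → ℝ} (hu : ContinuousOn u (Icc a T)) :
      IntegrableOn (fun t => truncatedGenerator F w v t (u t)) (Icc a T) :=
    hF.integrableOn_truncatedGenerator_comp isCompact_Icc hw.continuousOn hv.continuousOn hu
  obtain ⟨L, hL⟩ := hF.exists_lipschitzWith_truncatedGenerator isCompact_Icc hw.continuousOn
    hv.continuousOn
  obtain ⟨y, hy⟩ := exists_isBackwardSolution_of_lipschitzWith (h := h) haT
    (fun u hu => hint hu.continuousOn) hL
  have hmem : ∀ t ∈ Icc a T, y t ∈ Icc (w t) (v t) := fun t ht =>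
    ⟨hw.le_of_truncatedGenerator hy (hint hy.continuousOn) hwT t ht,
      hv.le_of_truncatedGenerator hwv hy (hint hy.continuousOn) hvT t ht⟩
  exact ⟨y, hy.congr fun t ht => truncatedGenerator_of_mem (hmem t ht), hmem⟩

end Comparison

section GronwallBarrier

variable {F : ℝ → ℝ → ℝ} {a T δ K ε : ℝ}

theorem gronwallBound_sub_mem_Icc (hδ : 0 ≤ δ) (hK : 0 ≤ K) (hε : 0 ≤ ε) {t : ℝ}
    (ht : t ∈ Icc a T) : gronwallBound δ K ε (T - t) ∈ Icc δ (gronwallBound δ K ε (T - a)) := by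
  have hmono := gronwallBound_mono hδ hε hK
  refine ⟨?_, hmono (sub_le_sub_left ht.1 T)⟩
  simpa only [gronwallBound_x0] using hmono (sub_nonneg.2 ht.2)

theorem isBackwardSubsolution_neg_gronwallBound (hF : IsLocallyLipschitzGenerator F (Icc a T))
    (hδ : 0 ≤ δ) (hK : 0 ≤ K) (hε : 0 ≤ ε)
    (hlinear : ∀ t ∈ Icc a T, ∀ x ∈ Icc 0 (gronwallBound δ K ε (T - a)),
      -(K * x + ε) ≤ F t (-x)) :
    IsBackwardSubsolution F a T fun t => -gronwallBound δ K ε (T - t) := by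
  have hderiv (t : ℝ) : HasDerivAt (fun t => -gronwallBound δ K ε (T - t))
      (K * gronwallBound δ K ε (T - t) + ε) t := by
    simpa only [neg_neg] using
      ((hasDerivAt_gronwallBound δ K ε (T - t)).comp_const_sub T t).fun_neg
  have hcont : Continuous fun t => -gronwallBound δ K ε (T - t) :=
    continuous_iff_continuousAt.2 fun t => (hderiv t).continuousAt
  refine isBackwardSubsolution_of_hasDerivAt
    (hF.integrableOn_comp isCompact_Icc hcont.continuousOn) (fun t _ => hderiv t) fun t ht => ?_
  exact hlinear t ht _ (Icc_subset_Icc_left hδ (gronwallBound_sub_mem_Icc hδ hK hε ht))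

theorem exists_isBackwardSolution_mem_Icc_neg_gronwallBound {h c : ℝ} (haT : a ≤ T)
    (hF : IsLocallyLipschitzGenerator F (Icc a T)) (hδ : 0 ≤ δ) (hK : 0 ≤ K) (hε : 0 ≤ ε)
    (hlinear : ∀ t ∈ Icc a T, ∀ x ∈ Icc 0 (gronwallBound δ K ε (T - a)),
      -(K * x + ε) ≤ F t (-x))
    (hc : ∀ t ∈ Icc a T, F t c ≤ 0) (hδh : -δ ≤ h) (hhc : h ≤ c) :
    ∃ y, IsBackwardSolution_s8 F a T h y ∧
      ∀ t ∈ Icc a T, y t ∈ Icc (-gronwallBound δ K ε (T - a)) c := by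
  have hbarrier {t : ℝ} (ht : t ∈ Icc a T) := gronwallBound_sub_mem_Icc hδ hK hε ht
  obtain ⟨y, hy, hmem⟩ := exists_isBackwardSolution_mem_Icc haT hF
    (isBackwardSubsolution_neg_gronwallBound hF hδ hK hε hlinear)
    (isBackwardSupersolution_const hc)
    (fun t ht => (neg_le_neg (hbarrier ht).1).trans (hδh.trans hhc))
    (by simpa only [sub_self, gronwallBound_x0] using hδh) hhc
  exact ⟨y, hy, fun t ht => Icc_subset_Icc_left (neg_le_neg (hbarrier ht).2) (hmem t ht)⟩

theorem neg_linear_le_neg_cubic {C₀ C₁ x B : ℝ} (hε : 0 ≤ ε) (hx : x ∈ Icc 0 B)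
    (hsmall : 2 * ε * B ^ 3 ≤ 1) :
    -(C₁ * x + (C₀ + 1)) ≤ 2 * ε * (-x) ^ 3 + C₁ * -x - C₀ := by
  have hcube : 2 * ε * x ^ 3 ≤ 2 * ε * B ^ 3 :=
    mul_le_mul_of_nonneg_left (pow_le_pow_left₀ hx.1 hx.2 3) (by positivity)
  rw [Odd.neg_pow (by decide)]
  linarith

end GronwallBarrier

/-- Bounded solutions of the dominating ODEs under the one-sided smallness
condition with a supersolution level `λ ≥ h̄` (Theorem 5.5 (iii)). -/
theorem stmt8
    (T : ℝ) (hT : 0 < T)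
    (Fl Fu : ℝ → ℝ → ℝ)
    (hle : ∀ t ∈ Icc (0:ℝ) T, ∀ y : ℝ, Fl t y ≤ Fu t y)
    (hmeasu : ∀ y : ℝ, Measurable fun t => Fu t y)
    (hmeasl : ∀ y : ℝ, Measurable fun t => Fl t y)
    (hreg : ∀ M : ℝ, 0 < M → ∃ L K : ℝ,
      ∀ t ∈ Icc (0:ℝ) T,
        LipschitzOnWith (Real.toNNReal L) (fun y => Fu t y) (Icc (-M) M) ∧
        LipschitzOnWith (Real.toNNReal L) (fun y => Fl t y) (Icc (-M) M) ∧
        ∀ y ∈ Icc (-M) M, |Fu t y| ≤ K ∧ |Fl t y| ≤ K)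
    (hl hu : ℝ) (hlu : hl ≤ hu)
    (lam C1 C0 ε : ℝ) (hlam : hu ≤ lam) (hC1 : 0 < C1) (hC0 : 0 ≤ C0) (hε : 0 < ε)
    (hsup : ∀ t ∈ Icc (0:ℝ) T, Fu t lam ≤ 0)
    (hgrowl : ∀ t ∈ Icc (0:ℝ) T, ∀ y : ℝ, y ≤ 0 →
      2 * ε * y ^ 3 + C1 * y - C0 ≤ Fl t y)
    (hεsmall : 2 * ε *
        (Real.exp (C1 * T) * max (-hl) 0 +
          ((C0 + 1) / C1) * (Real.exp (C1 * T) - 1)) ^ 3 ≤ 1) :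
    ∃ yu yl : ℝ → ℝ,
      ContinuousOn yu (Icc 0 T) ∧ ContinuousOn yl (Icc 0 T) ∧
      (∀ t ∈ Icc (0:ℝ) T, yu t = hu + ∫ s in t..T, Fu s (yu s)) ∧
      (∀ t ∈ Icc (0:ℝ) T, yl t = hl + ∫ s in t..T, Fl s (yl s)) ∧
      (∀ t ∈ Icc (0:ℝ) T,
        -(Real.exp (C1 * T) * max (-hl) 0 +
          ((C0 + 1) / C1) * (Real.exp (C1 * T) - 1)) ≤ yl t ∧ yl t ≤ lam) ∧
      (∀ t ∈ Icc (0:ℝ) T,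
        -(Real.exp (C1 * T) * max (-hl) 0 +
          ((C0 + 1) / C1) * (Real.exp (C1 * T) - 1)) ≤ yu t ∧ yu t ≤ lam) := by
  have hC₂ : Real.exp (C1 * T) * max (-hl) 0 + (C0 + 1) / C1 * (Real.exp (C1 * T) - 1) =
      gronwallBound (max (-hl) 0) C1 (C0 + 1) (T - 0) := by
    simp only [gronwallBound_of_K_ne_0 hC1.ne', mul_comm (max (-hl) 0), sub_zero]
  rw [hC₂] at hεsmall ⊢
  have hFu : IsLocallyLipschitzGenerator Fu (Icc 0 T) :=
    ⟨hmeasu, fun M hM => let ⟨L, _, hLK⟩ := hreg M hM; ⟨L.toNNReal, fun t ht => (hLK t ht).1⟩,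
      fun M hM => let ⟨_, K, hLK⟩ := hreg M hM; ⟨K, fun t ht y hy => ((hLK t ht).2.2 y hy).1⟩⟩
  have hFl : IsLocallyLipschitzGenerator Fl (Icc 0 T) :=
    ⟨hmeasl, fun M hM => let ⟨L, _, hLK⟩ := hreg M hM; ⟨L.toNNReal, fun t ht => (hLK t ht).2.1⟩,
      fun M hM => let ⟨_, K, hLK⟩ := hreg M hM; ⟨K, fun t ht y hy => ((hLK t ht).2.2 y hy).2⟩⟩
  have hlinear : ∀ t ∈ Icc 0 T, ∀ x ∈ Icc 0 (gronwallBound (max (-hl) 0) C1 (C0 + 1) (T - 0)),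
      -(C1 * x + (C0 + 1)) ≤ Fl t (-x) := fun t ht x hx =>
    (neg_linear_le_neg_cubic hε.le hx hεsmall).trans (hgrowl t ht _ (neg_nonpos.2 hx.1))
  have hδl : -max (-hl) 0 ≤ hl := neg_le.1 (le_max_left _ _)
  have hC₀ : 0 ≤ C0 + 1 := by positivity
  obtain ⟨yu, hyu, hyu_mem⟩ := exists_isBackwardSolution_mem_Icc_neg_gronwallBound hT.le hFu
    (le_max_right _ _) hC1.le hC₀ (fun t ht x hx => (hlinear t ht x hx).trans (hle t ht _)) hsup
    (hδl.trans hlu) hlam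
  obtain ⟨yl, hyl, hyl_mem⟩ := exists_isBackwardSolution_mem_Icc_neg_gronwallBound hT.le hFl
    (le_max_right _ _) hC1.le hC₀ hlinear (fun t ht => (hle t ht lam).trans (hsup t ht)) hδl
    (hlu.trans hlam)
  exact ⟨yu, yl, hyu.continuousOn, hyl.continuousOn, hyu.eq_add_integral, hyl.eq_add_integral,
    hyl_mem, hyu_mem⟩
end
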